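/- Let q₁ and q₂ be distinct primes and G a cyclic group of order q₁q₂, written as G ≅ H₁ × H₂ with H₁, H₂ the subgroups of orders q₁ and q₂, and let π₁ : G → H₁ and π₂ : G → H₂ be the projections. Then for every s with Re s > 1, ζ_{P_{q₁q₂}}(q₁q₂ s) · ζ_{P_{q₁q₂}}(s)^{q₁q₂} / ( ζ_{P_{q₁q₂}}(q₁ s)^{q₂} · ζ_{P_{q₁q₂}}(q₂ s)^{q₁} ) = Z^{(G)}(s) · ζ_P(s)^{q₁q₂} / ( Z^{(H₁)}(s)^{q₂} · Z^{(H₂)}(s)^{q₁} ); in particular all the infinite products involved converge and are nonzero. -/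

import Mathlib

/-!
Put `x p = N(p)^(-s)` and let `n` be the order of `g` in a finite abelian group `G`. The characters
of `G` take each `n`-th root of unity as value at `g` equally often, so
`∏_ρ (1 - ρ(g) x) = (1 - x^n)^(|G|/n)`; this turns `Z^{(G)}`, `Z^{(H₁)}` and `Z^{(H₂)}` into
products over `P` of factors depending only on the orders of `φ(p)`, `π₁(φ(p))` and `π₂(φ(p))`. In
the quotient `Z^{(G)} ζ_P^{|G|} / (Z^{(H₁)}^{|H₂|} Z^{(H₂)}^{|H₁|})` the factor at `p` cancels as
soon as one component of `φ(p)` is trivial. When `|H₁|` and `|H₂|` are distinct primes `q₁` and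
`q₂`, the remaining `p` are those for which `φ(p)` has order `q₁q₂`, and its components then have
orders `q₁` and `q₂`.
-/

section Characters

theorem prod_monoidHom_comp_of_surjective {A B M : Type*} [Group A] [Fintype A] [Group B]
    [Fintype B] [CommMonoid M] {f : A →* B} (hf : Function.Surjective f) (F : B → M) :
    ∏ a, F (f a) = (∏ b, F b) ^ Nat.card f.ker := by
  classical
  rw [← Finset.prod_fiberwise' (g := f), ← Finset.prod_pow]
  refine Finset.prod_congr rfl fun b _ => ?_
  rw [Finset.prod_const, MonoidHom.card_fiber_eq_of_mem_range f (hf b) (hf 1),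
    Nat.card_eq_fintype_card, Fintype.card_subtype]
  simp only [MonoidHom.mem_ker]

variable {G R : Type*} [CommGroup G] [Finite G]

theorem prod_one_sub_apply_generator_mul [CommRing R] [IsDomain R]
    [HasEnoughRootsOfUnity R (Nat.card G)] [Fintype (G →* Rˣ)] {g : G}
    (hg : ∀ h, h ∈ Subgroup.zpowers g) (x : R) :
    ∏ χ : G →* Rˣ, (1 - χ g * x) = 1 - x ^ Nat.card G := by
  obtain ⟨ζ, hζ⟩ := HasEnoughRootsOfUnity.exists_primitiveRoot R (Nat.card G)
  have hfactor := hζ.pow_sub_pow_eq_prod_sub_mul 1 x Nat.card_pos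
  rw [one_pow] at hfactor
  rw [hfactor]
  refine Finset.prod_nbij (fun χ : G →* Rˣ => (χ g : R)) (fun χ _ => ?_) (fun χ _ χ' _ h => ?_)
    (fun z hz => ?_) fun _ _ => rfl
  · rw [Polynomial.mem_nthRootsFinset Nat.card_pos, ← Units.val_pow_eq_pow_val, ← map_pow,
      pow_card_eq_one', map_one, Units.val_one]
  · exact (MonoidHom.eq_iff_eq_on_generator hg χ χ').2 (Units.ext h)
  · have hz : z ^ Nat.card G = 1 := (Polynomial.mem_nthRootsFinset Nat.card_pos 1).1 hz
    let u : Rˣ := Units.ofPowEqOne z _ hz Nat.card_pos.ne'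
    have hu : orderOf u ∣ orderOf g := by
      rw [orderOf_eq_card_of_forall_mem_zpowers hg, orderOf_dvd_iff_pow_eq_one]
      exact Units.pow_ofPowEqOne hz Nat.card_pos.ne'
    exact ⟨monoidHomOfForallMemZpowers hg hu, Finset.mem_coe.2 (Finset.mem_univ _),
      congrArg Units.val (monoidHomOfForallMemZpowers_apply_gen hg hu)⟩

theorem prod_one_sub_apply_mul [CommRing R] [IsDomain R]
    [HasEnoughRootsOfUnity R (Monoid.exponent G)] [Fintype (G →* Rˣ)] (g : G) (x : R) :
    ∏ ρ : G →* Rˣ, (1 - ρ g * x) = (1 - x ^ orderOf g) ^ (Nat.card G / orderOf g) := by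
  let C := Subgroup.zpowers g
  let γ : C := ⟨g, Subgroup.mem_zpowers g⟩
  have hγ : ∀ h, h ∈ Subgroup.zpowers γ := by
    rintro ⟨_, k, rfl⟩
    exact ⟨k, rfl⟩
  have : HasEnoughRootsOfUnity R (Nat.card C) :=
    .of_dvd R (Nat.card_zpowers g ▸ Monoid.order_dvd_exponent g)
  have : HasEnoughRootsOfUnity R (Monoid.exponent C) :=
    .of_dvd R (Monoid.exponent_submonoid_dvd C.toSubmonoid)
  have := Fintype.ofFinite (C →* Rˣ)
  have hker : Nat.card (MonoidHom.domRestrictHom C Rˣ).ker = Nat.card G / orderOf g := by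
    rw [CommGroup.card_domRestrictHom_ker, C.card_eq_card_quotient_mul_card_subgroup,
      Nat.card_zpowers, Nat.mul_div_cancel _ (orderOf_pos g)]
  calc ∏ ρ : G →* Rˣ, (1 - ρ g * x)
      = ∏ ρ : G →* Rˣ, (1 - MonoidHom.domRestrictHom C Rˣ ρ γ * x) := rfl
    _ = (∏ χ : C →* Rˣ, (1 - χ γ * x)) ^ (Nat.card G / orderOf g) := by
      rw [prod_monoidHom_comp_of_surjective (MonoidHom.domRestrict_surjective R C)
        (fun χ : C →* Rˣ => 1 - (χ γ : R) * x), hker]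
    _ = (1 - x ^ orderOf g) ^ (Nat.card G / orderOf g) := by
      rw [prod_one_sub_apply_generator_mul hγ, Nat.card_zpowers]

theorem norm_character_apply [NormedField R] (ρ : G →* Rˣ) (g : G) : ‖(ρ g : R)‖ = 1 :=
  (((Units.coeHom R).comp ρ).isOfFinOrder (isOfFinOrder_of_finite g)).norm_eq_one

theorem norm_character_apply_mul [NormedField R] (ρ : G →* Rˣ) (g : G) (a : R) :
    ‖ρ g * a‖ = ‖a‖ := by
  rw [norm_mul, norm_character_apply, one_mul]

end Characters

section EulerProducts

variable {ι 𝕜 : Type*} [NormedField 𝕜] {x : ι → 𝕜}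

/-- The Euler product `∏ i, (1 - x i)⁻¹`: for `x p = N(p)^(-s)` and `p` running over `Q ⊆ P` this is
`ζ_Q(s)`. -/
noncomputable def eulerProduct (x : ι → 𝕜) : 𝕜 := ∏' i, (1 - x i)⁻¹

/-- The product, over all characters `ρ` of `G`, of the Euler products twisted by `ρ ∘ ψ`: for
`x p = N(p)^(-s)` and `ψ = φ`, `π₁ ∘ φ` or `π₂ ∘ φ` this is `Z^{(G)}(s)`, `Z^{(H₁)}(s)` or
`Z^{(H₂)}(s)`. -/
noncomputable def charEulerProduct {G : Type*} [CommGroup G] (ψ : ι → G) (x : ι → 𝕜) : 𝕜 :=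
  ∏' ρ : G →* 𝕜ˣ, eulerProduct fun i => ρ (ψ i) * x i

theorem norm_pow_lt_one {a : 𝕜} (ha : ‖a‖ < 1) {n : ℕ} (hn : n ≠ 0) : ‖a ^ n‖ < 1 := by
  rw [norm_pow]
  exact pow_lt_one₀ (norm_nonneg _) ha hn

theorem one_sub_ne_zero_of_norm_lt_one {a : 𝕜} (ha : ‖a‖ < 1) : 1 - a ≠ 0 :=
  sub_ne_zero.2 fun h => by simp [← h] at ha

theorem summable_norm_pow (hx : Summable fun i => ‖x i‖) (hx₁ : ∀ i, ‖x i‖ < 1) {n : ℕ}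
    (hn : n ≠ 0) : Summable fun i => ‖x i ^ n‖ :=
  hx.of_nonneg_of_le (fun _ => norm_nonneg _) fun i => by
    rw [norm_pow]
    exact pow_le_of_le_one (norm_nonneg _) (hx₁ i).le hn

variable [CompleteSpace 𝕜]

theorem multipliable_one_sub (hx : Summable fun i => ‖x i‖) : Multipliable fun i => 1 - x i := by
  simpa only [sub_eq_add_neg] using
    multipliable_one_add_of_summable (f := fun i => -x i) (by simpa only [norm_neg] using hx)

theorem tprod_one_sub_ne_zero (hx : Summable fun i => ‖x i‖) (hx₁ : ∀ i, ‖x i‖ < 1) :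
    ∏' i, (1 - x i) ≠ 0 := by
  simpa only [sub_eq_add_neg] using tprod_one_add_ne_zero_of_summable (f := fun i => -x i)
    (fun i => by simpa only [sub_eq_add_neg] using one_sub_ne_zero_of_norm_lt_one (hx₁ i))
    (by simpa only [norm_neg] using hx)

theorem multipliable_inv_one_sub (hx : Summable fun i => ‖x i‖) (hx₁ : ∀ i, ‖x i‖ < 1) :
    Multipliable fun i => (1 - x i)⁻¹ :=
  (multipliable_one_sub hx).inv₀ (tprod_one_sub_ne_zero hx hx₁)

theorem hasProd_eulerProduct (hx : Summable fun i => ‖x i‖) (hx₁ : ∀ i, ‖x i‖ < 1) :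
    HasProd (fun i => (1 - x i)⁻¹) (eulerProduct x) :=
  (multipliable_inv_one_sub hx hx₁).hasProd

theorem eulerProduct_ne_zero (hx : Summable fun i => ‖x i‖) (hx₁ : ∀ i, ‖x i‖ < 1) :
    eulerProduct x ≠ 0 := by
  have hne := tprod_one_sub_ne_zero hx hx₁
  rw [eulerProduct, (multipliable_one_sub hx).tprod_inv₀ hne]
  exact inv_ne_zero hne

section Twisted

variable {G : Type*} [CommGroup G] [Finite G]

theorem multipliable_inv_one_sub_character_mul (ψ : ι → G) (hx : Summable fun i => ‖x i‖)
    (hx₁ : ∀ i, ‖x i‖ < 1) (ρ : G →* 𝕜ˣ) : Multipliable fun i => (1 - ρ (ψ i) * x i)⁻¹ :=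
  multipliable_inv_one_sub (by simpa only [norm_character_apply_mul] using hx)
    (by simpa only [norm_character_apply_mul] using hx₁)

variable [HasEnoughRootsOfUnity 𝕜 (Monoid.exponent G)]

theorem charEulerProduct_ne_zero (ψ : ι → G) (hx : Summable fun i => ‖x i‖)
    (hx₁ : ∀ i, ‖x i‖ < 1) : charEulerProduct ψ x ≠ 0 := by
  have := Fintype.ofFinite (G →* 𝕜ˣ)
  rw [charEulerProduct, tprod_fintype]
  exact Finset.prod_ne_zero_iff.2 fun ρ _ => eulerProduct_ne_zero
    (by simpa only [norm_character_apply_mul] using hx)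
    (by simpa only [norm_character_apply_mul] using hx₁)

theorem hasProd_charEulerProduct (ψ : ι → G) (hx : Summable fun i => ‖x i‖)
    (hx₁ : ∀ i, ‖x i‖ < 1) :
    HasProd (fun i => (1 - x i ^ orderOf (ψ i))⁻¹ ^ (Nat.card G / orderOf (ψ i)))
      (charEulerProduct ψ x) := by
  have := Fintype.ofFinite (G →* 𝕜ˣ)
  have hprod : HasProd (fun i => ∏ ρ : G →* 𝕜ˣ, (1 - ρ (ψ i) * x i)⁻¹)
      (charEulerProduct ψ x) := by
    rw [charEulerProduct, tprod_fintype]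
    exact hasProd_prod fun ρ _ => (multipliable_inv_one_sub_character_mul ψ hx hx₁ ρ).hasProd
  simpa only [Finset.prod_inv_distrib, prod_one_sub_apply_mul, inv_pow] using hprod

end Twisted

end EulerProducts

section Quotient

variable {H₁ H₂ 𝕜 : Type*} [CommGroup H₁] [Finite H₁] [CommGroup H₂] [Finite H₂] [NormedField 𝕜]

/-- The factor attached to an element with `φ(p) = g` and `N(p)^(-s) = y` in the product over `P`
for `Z^{(G)}(s) ζ_P(s)^{|G|} / (Z^{(H₁)}(s)^{|H₂|} Z^{(H₂)}(s)^{|H₁|})`, where `G = H₁ × H₂`. -/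
noncomputable def quotientEulerFactor (g : H₁ × H₂) (y : 𝕜) : 𝕜 :=
  (1 - y ^ orderOf g)⁻¹ ^ (Nat.card (H₁ × H₂) / orderOf g) * (1 - y)⁻¹ ^ Nat.card (H₁ × H₂) /
    (((1 - y ^ orderOf g.1)⁻¹ ^ (Nat.card H₁ / orderOf g.1)) ^ Nat.card H₂ *
      ((1 - y ^ orderOf g.2)⁻¹ ^ (Nat.card H₂ / orderOf g.2)) ^ Nat.card H₁)

theorem quotientEulerFactor_eq_one {g : H₁ × H₂} (hg : g.1 = 1 ∨ g.2 = 1) {y : 𝕜}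
    (hy : ‖y‖ < 1) : quotientEulerFactor g y = 1 := by
  have hne (n : ℕ) (hn : n ≠ 0) : (1 - y ^ n)⁻¹ ≠ 0 :=
    inv_ne_zero (one_sub_ne_zero_of_norm_lt_one (norm_pow_lt_one hy hn))
  have hy0 : (1 - y)⁻¹ ≠ 0 := by simpa only [pow_one] using hne 1 one_ne_zero
  rw [quotientEulerFactor, Nat.card_prod, Prod.orderOf]
  rcases hg with h | h
  · have hcard : Nat.card H₁ * Nat.card H₂ / orderOf g.2 =
        Nat.card H₂ / orderOf g.2 * Nat.card H₁ := by
      rw [Nat.mul_div_assoc _ (orderOf_dvd_natCard g.2), mul_comm]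
    simp only [h, orderOf_one, Nat.lcm_one_left, Nat.div_one, pow_one, ← pow_mul, hcard]
    rw [mul_comm, div_self]
    exact mul_ne_zero (pow_ne_zero _ hy0) (pow_ne_zero _ (hne _ (orderOf_pos _).ne'))
  · have hcard : Nat.card H₁ * Nat.card H₂ / orderOf g.1 =
        Nat.card H₁ / orderOf g.1 * Nat.card H₂ := by
      rw [mul_comm, Nat.mul_div_assoc _ (orderOf_dvd_natCard g.1), mul_comm]
    simp only [h, orderOf_one, Nat.lcm_one_right, Nat.div_one, pow_one, ← pow_mul, hcard]
    rw [mul_comm (Nat.card H₂), div_self]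
    exact mul_ne_zero (pow_ne_zero _ (hne _ (orderOf_pos _).ne')) (pow_ne_zero _ hy0)

theorem hasProd_quotientEulerFactor {ι : Type*} [CompleteSpace 𝕜]
    [HasEnoughRootsOfUnity 𝕜 (Monoid.exponent (H₁ × H₂))]
    (φ : ι → H₁ × H₂) {x : ι → 𝕜} (hx : Summable fun i => ‖x i‖) (hx₁ : ∀ i, ‖x i‖ < 1) :
    HasProd (fun i => quotientEulerFactor (φ i) (x i))
      (charEulerProduct φ x * eulerProduct x ^ Nat.card (H₁ × H₂) /
        (charEulerProduct (fun i => (φ i).1) x ^ Nat.card H₂ *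
          charEulerProduct (fun i => (φ i).2) x ^ Nat.card H₁)) := by
  have : HasEnoughRootsOfUnity 𝕜 (Monoid.exponent H₁) :=
    .of_dvd 𝕜 (MonoidHom.exponent_dvd (f := MonoidHom.fst H₁ H₂) Prod.fst_surjective)
  have : HasEnoughRootsOfUnity 𝕜 (Monoid.exponent H₂) :=
    .of_dvd 𝕜 (MonoidHom.exponent_dvd (f := MonoidHom.snd H₁ H₂) Prod.snd_surjective)
  refine ((hasProd_charEulerProduct φ hx hx₁).mul ((hasProd_eulerProduct hx hx₁).pow _)).div₀
    (((hasProd_charEulerProduct _ hx hx₁).pow _).mul ((hasProd_charEulerProduct _ hx hx₁).pow _))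
    (mul_ne_zero (pow_ne_zero _ ?_) (pow_ne_zero _ ?_))
  · exact charEulerProduct_ne_zero _ hx hx₁
  · exact charEulerProduct_ne_zero _ hx hx₁

end Quotient

section PrimeOrder

theorem orderOf_eq_natCard_iff_ne_one {H : Type*} [Group H] (hH : (Nat.card H).Prime) {h : H} :
    orderOf h = Nat.card H ↔ h ≠ 1 := by
  constructor
  · rintro hord rfl
    exact hH.ne_one (hord ▸ orderOf_one)
  · intro hne
    exact ((Nat.dvd_prime hH).1 (orderOf_dvd_natCard h)).resolve_left (mt orderOf_eq_one_iff.1 hne)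

variable {H₁ H₂ 𝕜 : Type*} [CommGroup H₁] [Finite H₁] [CommGroup H₂] [Finite H₂]

theorem orderOf_prod_eq_natCard_mul_iff (hco : (Nat.card H₁).Coprime (Nat.card H₂))
    {g : H₁ × H₂} : orderOf g = Nat.card H₁ * Nat.card H₂ ↔
      orderOf g.1 = Nat.card H₁ ∧ orderOf g.2 = Nat.card H₂ := by
  have hdvd₁ : orderOf g.1 ∣ Nat.card H₁ := orderOf_dvd_natCard g.1
  have hdvd₂ : orderOf g.2 ∣ Nat.card H₂ := orderOf_dvd_natCard g.2
  rw [Prod.orderOf, (hco.of_dvd hdvd₁ hdvd₂).lcm_eq_mul]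
  exact mul_eq_mul_iff_eq_and_eq_of_pos (Nat.le_of_dvd Nat.card_pos hdvd₁)
    (Nat.le_of_dvd Nat.card_pos hdvd₂) (orderOf_pos _) Nat.card_pos

variable [NormedField 𝕜]

theorem quotientEulerFactor_of_orderOf_eq (hco : (Nat.card H₁).Coprime (Nat.card H₂))
    {g : H₁ × H₂} (hg : orderOf g = Nat.card H₁ * Nat.card H₂) (y : 𝕜) :
    quotientEulerFactor g y =
      (1 - y ^ (Nat.card H₁ * Nat.card H₂))⁻¹ * (1 - y)⁻¹ ^ (Nat.card H₁ * Nat.card H₂) /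
        ((1 - y ^ Nat.card H₁)⁻¹ ^ Nat.card H₂ * (1 - y ^ Nat.card H₂)⁻¹ ^ Nat.card H₁) := by
  obtain ⟨hg₁, hg₂⟩ := (orderOf_prod_eq_natCard_mul_iff hco).1 hg
  rw [quotientEulerFactor, Nat.card_prod, hg, hg₁, hg₂, Nat.div_self Nat.card_pos,
    Nat.div_self Nat.card_pos, Nat.div_self (Nat.mul_pos Nat.card_pos Nat.card_pos)]
  simp only [pow_one]

variable {ι : Type*} [CompleteSpace 𝕜] {x : ι → 𝕜}

theorem hasProd_quotientEulerFactor_orderOf_eq (hco : (Nat.card H₁).Coprime (Nat.card H₂))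
    (φ : ι → H₁ × H₂) (hx : Summable fun i => ‖x i‖) (hx₁ : ∀ i, ‖x i‖ < 1) :
    let ζ (n : ℕ) : 𝕜 :=
      eulerProduct fun i : {i // orderOf (φ i) = Nat.card H₁ * Nat.card H₂} => x i ^ n
    HasProd (fun i : {i // orderOf (φ i) = Nat.card H₁ * Nat.card H₂} =>
        quotientEulerFactor (φ i) (x i))
      (ζ (Nat.card H₁ * Nat.card H₂) * ζ 1 ^ (Nat.card H₁ * Nat.card H₂) /
        (ζ (Nat.card H₁) ^ Nat.card H₂ * ζ (Nat.card H₂) ^ Nat.card H₁)) := by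
  intro ζ
  have hsum (n : ℕ) (hn : n ≠ 0) := (summable_norm_pow hx hx₁ hn).subtype
    {i | orderOf (φ i) = Nat.card H₁ * Nat.card H₂}
  have hζ (n : ℕ) (hn : n ≠ 0) : HasProd _ (ζ n) :=
    hasProd_eulerProduct (hsum n hn) fun i => norm_pow_lt_one (hx₁ i) hn
  have hζ_ne (n : ℕ) (hn : n ≠ 0) : ζ n ≠ 0 :=
    eulerProduct_ne_zero (hsum n hn) fun i => norm_pow_lt_one (hx₁ i) hn
  have h₁ : Nat.card H₁ ≠ 0 := Nat.card_pos.ne'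
  have h₂ : Nat.card H₂ ≠ 0 := Nat.card_pos.ne'
  refine (((hζ _ (mul_ne_zero h₁ h₂)).mul ((hζ 1 one_ne_zero).pow _)).div₀
    (((hζ _ h₁).pow _).mul ((hζ _ h₂).pow _))
    (mul_ne_zero (pow_ne_zero _ (hζ_ne _ h₁)) (pow_ne_zero _ (hζ_ne _ h₂)))).congr_fun fun i => ?_
  simp only [quotientEulerFactor_of_orderOf_eq hco i.2, pow_one]

theorem eulerProduct_quotient_eq_charEulerProduct_quotient
    [HasEnoughRootsOfUnity 𝕜 (Monoid.exponent (H₁ × H₂))] {q₁ q₂ : ℕ} (hq₁ : q₁.Prime)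
    (hq₂ : q₂.Prime) (hq : q₁ ≠ q₂) (hcard₁ : Nat.card H₁ = q₁) (hcard₂ : Nat.card H₂ = q₂)
    (φ : ι → H₁ × H₂) (hx : Summable fun i => ‖x i‖) (hx₁ : ∀ i, ‖x i‖ < 1) :
    let ζ (n : ℕ) : 𝕜 := eulerProduct fun i : {i // orderOf (φ i) = q₁ * q₂} => x i ^ n
    ζ (q₁ * q₂) * ζ 1 ^ (q₁ * q₂) / (ζ q₁ ^ q₂ * ζ q₂ ^ q₁) =
      charEulerProduct φ x * eulerProduct x ^ (q₁ * q₂) /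
        (charEulerProduct (fun i => (φ i).1) x ^ q₂ *
          charEulerProduct (fun i => (φ i).2) x ^ q₁) := by
  subst hcard₁ hcard₂
  have hco : (Nat.card H₁).Coprime (Nat.card H₂) := (Nat.coprime_primes hq₁ hq₂).2 hq
  have hsupport : (fun i => quotientEulerFactor (φ i) (x i)).mulSupport ⊆
      {i | orderOf (φ i) = Nat.card H₁ * Nat.card H₂} := fun i hi => by
    rw [Set.mem_ofPred_eq, orderOf_prod_eq_natCard_mul_iff hco, orderOf_eq_natCard_iff_ne_one hq₁,
      orderOf_eq_natCard_iff_ne_one hq₂, ← not_or]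
    exact fun htriv => hi (quotientEulerFactor_eq_one htriv (hx₁ i))
  have hprod := hasProd_quotientEulerFactor φ hx hx₁
  rw [Nat.card_prod] at hprod
  exact (hasProd_quotientEulerFactor_orderOf_eq hco φ hx hx₁).unique
    ((hasProd_subtype_iff_of_mulSupport_subset hsupport).2 hprod)

end PrimeOrder

theorem norm_ofReal_cpow_neg_lt_one {a : ℝ} (ha : 1 < a) {s : ℂ} (hs : 0 < s.re) :
    ‖(a : ℂ) ^ (-s)‖ < 1 := by
  rw [Complex.norm_cpow_eq_rpow_re_of_pos (one_pos.trans ha)]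
  exact Real.rpow_lt_one_of_one_lt_of_neg ha (neg_lt_zero.2 hs)

theorem summable_norm_ofReal_cpow_neg {ι : Type*} {N : ι → ℝ} (hN : ∀ i, 0 < N i) {s : ℂ}
    (hsum : Summable fun i => N i ^ (-s.re)) : Summable fun i => ‖(N i : ℂ) ^ (-s)‖ := by
  simpa only [Complex.norm_cpow_eq_rpow_re_of_pos (hN _), Complex.neg_re] using hsum

theorem zetaPq1q2_functional_equation_general {P : Type*} (N : P → ℝ)
    (hN : ∀ p, 1 < N p)
    (q₁ q₂ : ℕ) (hq₁ : q₁.Prime) (hq₂ : q₂.Prime) (hq : q₁ ≠ q₂)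
    {H₁ H₂ : Type*} [CommGroup H₁] [Fintype H₁] [CommGroup H₂] [Fintype H₂]
    (hcard₁ : Fintype.card H₁ = q₁) (hcard₂ : Fintype.card H₂ = q₂)
    (φ : P → H₁ × H₂)
    (ζpq ζP ZG ZH₁ ZH₂ : ℂ → ℂ)
    (hζpq : ∀ t : ℂ, ζpq t
      = ∏' p : {p : P // orderOf (φ p) = q₁ * q₂}, (1 - (N p.1 : ℂ) ^ (-t))⁻¹)
    (hζP : ∀ t : ℂ, ζP t = ∏' p : P, (1 - (N p : ℂ) ^ (-t))⁻¹)
    (hZG : ∀ t : ℂ, ZG t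
      = ∏' ρ : H₁ × H₂ →* ℂˣ, ∏' p : P, (1 - (ρ (φ p) : ℂ) * (N p : ℂ) ^ (-t))⁻¹)
    (hZH₁ : ∀ t : ℂ, ZH₁ t
      = ∏' ρ : H₁ →* ℂˣ, ∏' p : P, (1 - (ρ (φ p).1 : ℂ) * (N p : ℂ) ^ (-t))⁻¹)
    (hZH₂ : ∀ t : ℂ, ZH₂ t
      = ∏' ρ : H₂ →* ℂˣ, ∏' p : P, (1 - (ρ (φ p).2 : ℂ) * (N p : ℂ) ^ (-t))⁻¹)
    (s : ℂ) (hs : 0 < s.re) (hsum : Summable fun p => N p ^ (-s.re)) :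
    (∀ t ∈ ({(q₁ : ℂ) * q₂ * s, s, (q₁ : ℂ) * s, (q₂ : ℂ) * s} : Set ℂ),
      Multipliable (fun p : {p : P // orderOf (φ p) = q₁ * q₂} =>
        (1 - (N p.1 : ℂ) ^ (-t))⁻¹) ∧ ζpq t ≠ 0) ∧
    (Multipliable (fun p : P => (1 - (N p : ℂ) ^ (-s))⁻¹) ∧ ζP s ≠ 0) ∧
    (∀ ρ : H₁ × H₂ →* ℂˣ,
      Multipliable (fun p : P => (1 - (ρ (φ p) : ℂ) * (N p : ℂ) ^ (-s))⁻¹)) ∧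
    (∀ ρ : H₁ →* ℂˣ,
      Multipliable (fun p : P => (1 - (ρ (φ p).1 : ℂ) * (N p : ℂ) ^ (-s))⁻¹)) ∧
    (∀ ρ : H₂ →* ℂˣ,
      Multipliable (fun p : P => (1 - (ρ (φ p).2 : ℂ) * (N p : ℂ) ^ (-s))⁻¹)) ∧
    ZG s ≠ 0 ∧ ZH₁ s ≠ 0 ∧ ZH₂ s ≠ 0 ∧
    ζpq ((q₁ : ℂ) * q₂ * s) * ζpq s ^ (q₁ * q₂)
        / (ζpq ((q₁ : ℂ) * s) ^ q₂ * ζpq ((q₂ : ℂ) * s) ^ q₁)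
      = ZG s * ζP s ^ (q₁ * q₂) / (ZH₁ s ^ q₂ * ZH₂ s ^ q₁) := by
  have hx := summable_norm_ofReal_cpow_neg (fun p => one_pos.trans (hN p)) hsum
  have hx₁ (p : P) := norm_ofReal_cpow_neg_lt_one (hN p) hs
  have hpow (n : ℕ) (p : P) : (N p : ℂ) ^ (-(n * s)) = ((N p : ℂ) ^ (-s)) ^ n := by
    rw [← mul_neg, Complex.cpow_nat_mul]
  obtain rfl := funext hζpq
  obtain rfl := funext hζP
  obtain rfl := funext hZG
  obtain rfl := funext hZH₁
  obtain rfl := funext hZH₂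
  refine ⟨?_, ⟨multipliable_inv_one_sub hx hx₁, eulerProduct_ne_zero hx hx₁⟩,
    multipliable_inv_one_sub_character_mul φ hx hx₁,
    multipliable_inv_one_sub_character_mul _ hx hx₁,
    multipliable_inv_one_sub_character_mul _ hx hx₁, charEulerProduct_ne_zero φ hx hx₁,
    charEulerProduct_ne_zero _ hx hx₁, charEulerProduct_ne_zero _ hx hx₁, ?_⟩
  · intro t ht
    obtain ⟨n, hn, rfl⟩ : ∃ n : ℕ, n ≠ 0 ∧ t = n * s := by
      rcases ht with rfl | rfl | rfl | rfl
      · exact ⟨q₁ * q₂, mul_ne_zero hq₁.ne_zero hq₂.ne_zero, by rw [Nat.cast_mul]⟩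
      · exact ⟨1, one_ne_zero, by rw [Nat.cast_one, one_mul]⟩
      · exact ⟨q₁, hq₁.ne_zero, rfl⟩
      · exact ⟨q₂, hq₂.ne_zero, rfl⟩
    simp only [hpow]
    have hsum_n := (summable_norm_pow hx hx₁ hn).subtype {p | orderOf (φ p) = q₁ * q₂}
    have hlt_n (p : {p // orderOf (φ p) = q₁ * q₂}) := norm_pow_lt_one (hx₁ p) hn
    exact ⟨multipliable_inv_one_sub hsum_n hlt_n, eulerProduct_ne_zero hsum_n hlt_n⟩
  · have key := eulerProduct_quotient_eq_charEulerProduct_quotient hq₁ hq₂ hq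
      (Nat.card_eq_fintype_card.trans hcard₁) (Nat.card_eq_fintype_card.trans hcard₂) φ hx hx₁
    simpa only [← Nat.cast_mul, hpow, pow_one, eulerProduct, charEulerProduct] using key

/-- Let `q₁ ≠ q₂` be primes and `G = H₁ × H₂` a cyclic group of order `q₁q₂`, with `H₁, H₂`
the subgroups of orders `q₁, q₂` and projections `π₁, π₂`.  With
`ζ_{P_{q₁q₂}}(t) = ∏_{ord(φ(p)) = q₁q₂} (1 - N(p)^(-t))⁻¹`, `ζ_P(t) = ∏_p (1 - N(p)^(-t))⁻¹`,
`Z^{(G)}(t) = ∏_{ρ ∈ Ĝ} ∏_p (1 - ρ(φ(p)) N(p)^(-t))⁻¹` and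
`Z^{(Hᵢ)}(t) = ∏_{ρ ∈ Ĥᵢ} ∏_p (1 - ρ(πᵢ(φ(p))) N(p)^(-t))⁻¹`, for `Re s > 1` one has
`ζ_{P_{q₁q₂}}(q₁q₂s) ζ_{P_{q₁q₂}}(s)^{q₁q₂} / (ζ_{P_{q₁q₂}}(q₁s)^{q₂} ζ_{P_{q₁q₂}}(q₂s)^{q₁})
  = Z^{(G)}(s) ζ_P(s)^{q₁q₂} / (Z^{(H₁)}(s)^{q₂} Z^{(H₂)}(s)^{q₁})`,
all the infinite products involved converging and being nonzero. -/
theorem zetaPq1q2_functional_equation {P : Type*} [Countable P] [Infinite P] (N : P → ℝ)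
    (hN : ∀ p, 1 < N p)
    (hsum : ∀ σ : ℝ, 1 < σ → Summable fun p => (N p) ^ (-σ))
    (q₁ q₂ : ℕ) (hq₁ : q₁.Prime) (hq₂ : q₂.Prime) (hq : q₁ ≠ q₂)
    {H₁ H₂ : Type*} [CommGroup H₁] [Fintype H₁] [CommGroup H₂] [Fintype H₂]
    (hcard₁ : Fintype.card H₁ = q₁) (hcard₂ : Fintype.card H₂ = q₂)
    (φ : P → H₁ × H₂)
    (ζpq ζP ZG ZH₁ ZH₂ : ℂ → ℂ)
    (hζpq : ∀ t : ℂ, ζpq t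
      = ∏' p : {p : P // orderOf (φ p) = q₁ * q₂}, (1 - (N p.1 : ℂ) ^ (-t))⁻¹)
    (hζP : ∀ t : ℂ, ζP t = ∏' p : P, (1 - (N p : ℂ) ^ (-t))⁻¹)
    (hZG : ∀ t : ℂ, ZG t
      = ∏' ρ : H₁ × H₂ →* ℂˣ, ∏' p : P, (1 - (ρ (φ p) : ℂ) * (N p : ℂ) ^ (-t))⁻¹)
    (hZH₁ : ∀ t : ℂ, ZH₁ t
      = ∏' ρ : H₁ →* ℂˣ, ∏' p : P, (1 - (ρ (φ p).1 : ℂ) * (N p : ℂ) ^ (-t))⁻¹)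
    (hZH₂ : ∀ t : ℂ, ZH₂ t
      = ∏' ρ : H₂ →* ℂˣ, ∏' p : P, (1 - (ρ (φ p).2 : ℂ) * (N p : ℂ) ^ (-t))⁻¹)
    (s : ℂ) (hs : 1 < s.re) :
    (∀ t ∈ ({(q₁ : ℂ) * q₂ * s, s, (q₁ : ℂ) * s, (q₂ : ℂ) * s} : Set ℂ),
      Multipliable (fun p : {p : P // orderOf (φ p) = q₁ * q₂} =>
        (1 - (N p.1 : ℂ) ^ (-t))⁻¹) ∧ ζpq t ≠ 0) ∧
    (Multipliable (fun p : P => (1 - (N p : ℂ) ^ (-s))⁻¹) ∧ ζP s ≠ 0) ∧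
    (∀ ρ : H₁ × H₂ →* ℂˣ,
      Multipliable (fun p : P => (1 - (ρ (φ p) : ℂ) * (N p : ℂ) ^ (-s))⁻¹)) ∧
    (∀ ρ : H₁ →* ℂˣ,
      Multipliable (fun p : P => (1 - (ρ (φ p).1 : ℂ) * (N p : ℂ) ^ (-s))⁻¹)) ∧
    (∀ ρ : H₂ →* ℂˣ,
      Multipliable (fun p : P => (1 - (ρ (φ p).2 : ℂ) * (N p : ℂ) ^ (-s))⁻¹)) ∧
    ZG s ≠ 0 ∧ ZH₁ s ≠ 0 ∧ ZH₂ s ≠ 0 ∧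
    ζpq ((q₁ : ℂ) * q₂ * s) * ζpq s ^ (q₁ * q₂)
        / (ζpq ((q₁ : ℂ) * s) ^ q₂ * ζpq ((q₂ : ℂ) * s) ^ q₁)
      = ZG s * ζP s ^ (q₁ * q₂) / (ZH₁ s ^ q₂ * ZH₂ s ^ q₁) :=
  zetaPq1q2_functional_equation_general N hN q₁ q₂ hq₁ hq₂ hq hcard₁ hcard₂ φ ζpq ζP ZG ZH₁ ZH₂
    hζpq hζP hZG hZH₁ hZH₂ s (one_pos.trans hs) (hsum s.re hs)
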